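/- arXiv:1903.00579 — 3 statements merged into one kernel-verified Lean document; each statement's English description precedes it below -/
import Mathlib

section
/- Let X and Y be linear orders connected by a relation G. Then the relation G' = {(x, y) ∈ X × Y | there exists x' ∈ X with x ≤ x' such that G(x', y') holds for all y' ∈ Y with y ≤ y'} is also a connection between X and Y; moreover G' is antitone in the first argument (if x₁ ≤ x₂ and G'(x₂, y) then G'(x₁, y)) and monotone in the second argument (if y₁ ≤ y₂ and G'(x, y₁) then G'(x, y₂)). -/
/-- `∃^cf x, A x`: for every `x'` there exists `x ≥ x'` with `A x`. -/
def CofExists {X : Type*} [LinearOrder X] (A : X → Prop) : Prop :=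
  ∀ x' : X, ∃ x : X, x' ≤ x ∧ A x

/-- `∀^cf x, A x`: there exists `x'` such that `A x` holds for all `x ≥ x'`. -/
def CofForall {X : Type*} [LinearOrder X] (A : X → Prop) : Prop :=
  ∃ x' : X, ∀ x : X, x' ≤ x → A x

/-- `G ⊆ X × Y` is a connection between `X` and `Y` if
`∃^cf x, ∀^cf y, G x y` and `∃^cf y, ∀^cf x, ¬ G x y`. -/
def IsConnection {X Y : Type*} [LinearOrder X] [LinearOrder Y] (G : X → Y → Prop) : Prop :=
  CofExists (fun x => CofForall (fun y => G x y)) ∧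
  CofExists (fun y => CofForall (fun x => ¬ G x y))

theorem CofExists.mono {X : Type*} [LinearOrder X] {A B : X → Prop}
    (hA : CofExists A) (hAB : ∀ x, A x → B x) : CofExists B :=
  fun x' =>
    let ⟨x, hx, hAx⟩ := hA x'
    ⟨x, hx, hAB x hAx⟩

theorem CofForall.mono {X : Type*} [LinearOrder X] {A B : X → Prop}
    (hA : CofForall A) (hAB : ∀ x, A x → B x) : CofForall B :=
  let ⟨x', hx'⟩ := hA
  ⟨x', fun x hx => hAB x (hx' x hx)⟩

theorem CofForall.forall_ge {X : Type*} [LinearOrder X] {A : X → Prop}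
    (hA : CofForall A) : CofForall (fun x => ∀ x', x ≤ x' → A x') :=
  let ⟨x₀, hx₀⟩ := hA
  ⟨x₀, fun _ hx x' hx' => hx₀ x' (hx.trans hx')⟩

/-- The relation `G'` built from `G`: some row of `G` at or above `x` holds from `y` onwards.
It replaces a connection by one that is antitone in `x` and monotone in `y`. -/
def monotoneRegularization {X Y : Type*} [LE X] [LE Y] (G : X → Y → Prop) (x : X) (y : Y) : Prop :=
  ∃ x' : X, x ≤ x' ∧ ∀ y' : Y, y ≤ y' → G x' y'

section

variable {X Y : Type*} [Preorder X] [LE Y] {G : X → Y → Prop} {x : X} {y : Y}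

theorem monotoneRegularization_of_forall_ge (h : ∀ y', y ≤ y' → G x y') :
    monotoneRegularization G x y :=
  ⟨x, le_rfl, h⟩

theorem antitone_monotoneRegularization (G : X → Y → Prop) :
    Antitone (monotoneRegularization G) :=
  fun _ _ hx _ ⟨x', hx', hG⟩ => ⟨x', hx.trans hx', hG⟩

end

section

variable {X Y : Type*} [LE X] [Preorder Y] {G : X → Y → Prop} {x : X} {y : Y}

theorem not_monotoneRegularization_of_forall_ge (h : ∀ x', x ≤ x' → ¬ G x' y) :
    ¬ monotoneRegularization G x y :=
  fun ⟨x', hx', hG⟩ => h x' hx' (hG y le_rfl)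

theorem monotone_monotoneRegularization (G : X → Y → Prop) (x : X) :
    Monotone (monotoneRegularization G x) :=
  fun _ _ hy ⟨x', hx', hG⟩ => ⟨x', hx', fun y' hy' => hG y' (hy.trans hy')⟩

end

theorem IsConnection.monotoneRegularization {X Y : Type*} [LinearOrder X] [LinearOrder Y]
    {G : X → Y → Prop} (hG : IsConnection G) : IsConnection (monotoneRegularization G) :=
  ⟨hG.1.mono fun _ hx => hx.forall_ge.mono fun _ => monotoneRegularization_of_forall_ge,
    hG.2.mono fun _ hy => hy.forall_ge.mono fun _ => not_monotoneRegularization_of_forall_ge⟩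

/-- If `G` connects `X` and `Y`, then
`G' = {(x,y) | ∃ x' ≥ x, ∀ y' ≥ y, G x' y'}` also connects `X` and `Y`;
moreover `G'` is antitone in the first argument and monotone in the second. -/
theorem isConnection_antitone_monotone {X Y : Type*} [LinearOrder X] [LinearOrder Y]
    (G : X → Y → Prop) (hG : IsConnection G) :
    IsConnection (fun (x : X) (y : Y) => ∃ x' : X, x ≤ x' ∧ ∀ y' : Y, y ≤ y' → G x' y') ∧
    (∀ x₁ x₂ : X, ∀ y : Y, x₁ ≤ x₂ →
      (∃ x' : X, x₂ ≤ x' ∧ ∀ y' : Y, y ≤ y' → G x' y') →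
      (∃ x' : X, x₁ ≤ x' ∧ ∀ y' : Y, y ≤ y' → G x' y')) ∧
    (∀ x : X, ∀ y₁ y₂ : Y, y₁ ≤ y₂ →
      (∃ x' : X, x ≤ x' ∧ ∀ y' : Y, y₁ ≤ y' → G x' y') →
      (∃ x' : X, x ≤ x' ∧ ∀ y' : Y, y₂ ≤ y' → G x' y')) :=
  ⟨hG.monotoneRegularization,
    fun _ _ y hx => antitone_monotoneRegularization G hx y,
    fun x _ _ hy => monotone_monotoneRegularization G x hy⟩
end

section
/- Let X and Y be linear orders without greatest element. If there exists a connection between X and Y, then X and Y have the same cofinality. -/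
/-- The cofinality of a linear order: the least cardinality of a subset
that is unbounded above. -/
noncomputable def cofinality (X : Type*) [LinearOrder X] : Cardinal :=
  sInf {c : Cardinal | ∃ S : Set X, (∀ b : X, ∃ y ∈ S, ¬ y ≤ b) ∧ Cardinal.mk S = c}

/-!
A connection yields maps `f : X → Y` and `g : Y → X` with `f x ≤ y → x ≤ g y` (a Tukey reduction):
choose `x' ≥ x` with `G x' y` for all `y ≥ f x`, and `y' ≥ y` with `¬ G x y'` for all `x ≥ g y`.
If `f x ≤ y` then `G x' y'` holds, so `x' < g y`. Such a `g` sends cofinal sets to cofinal sets,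
hence `cof X ≤ cof Y`. Exchanging `X` and `Y` turns `G` into the connection `¬ G`, which gives the
reverse inequality.
-/

universe u v

theorem cofinality_eq_cof (X : Type*) [LinearOrder X] [NoMaxOrder X] :
    cofinality X = Order.cof X := by
  have unbounded_iff (S : Set X) : (∀ b, ∃ y ∈ S, ¬ y ≤ b) ↔ IsCofinal S := by
    rw [← not_bddAbove_iff', not_bddAbove_iff_isCofinal]
  simp only [cofinality, unbounded_iff]
  refine le_antisymm (Order.le_cof_iff.mpr fun S hS => csInf_le' ⟨S, hS, rfl⟩) ?_
  exact le_csInf ⟨_, Set.univ, .univ, rfl⟩ fun _ ⟨S, hS, hc⟩ => hc ▸ Order.cof_le hS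

theorem isCofinal_image_of_le_imp_le {X Y : Type*} [LE X] [LE Y] {f : X → Y} {g : Y → X}
    (hfg : ∀ x y, f x ≤ y → x ≤ g y) {S : Set Y} (hS : IsCofinal S) : IsCofinal (g '' S) := by
  intro x
  obtain ⟨y, hy, hxy⟩ := hS (f x)
  exact ⟨g y, Set.mem_image_of_mem g hy, hfg x y hxy⟩

theorem lift_cof_le_of_le_imp_le {X : Type u} {Y : Type v} [Preorder X] [Preorder Y]
    {f : X → Y} {g : Y → X} (hfg : ∀ x y, f x ≤ y → x ≤ g y) :
    Cardinal.lift.{v} (Order.cof X) ≤ Cardinal.lift.{u} (Order.cof Y) := by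
  obtain ⟨S, hS, hcard⟩ := Order.exists_cof_eq Y
  calc Cardinal.lift.{v} (Order.cof X)
      ≤ Cardinal.lift.{v} (Cardinal.mk (g '' S)) :=
        Cardinal.lift_le.mpr (Order.cof_le (isCofinal_image_of_le_imp_le hfg hS))
    _ ≤ Cardinal.lift.{u} (Cardinal.mk S) := Cardinal.mk_image_le_lift
    _ = Cardinal.lift.{u} (Order.cof Y) := by rw [hcard]

namespace IsConnection

variable {X : Type u} {Y : Type v} [LinearOrder X] [LinearOrder Y] {G : X → Y → Prop}

theorem swap_not (hG : IsConnection G) : IsConnection fun y x => ¬ G x y :=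
  ⟨hG.2, by simpa only [not_not] using hG.1⟩

theorem exists_le_imp_le (hG : IsConnection G) :
    ∃ (f : X → Y) (g : Y → X), ∀ x y, f x ≤ y → x ≤ g y := by
  obtain ⟨hX, hY⟩ := hG
  choose x' le_x' f G_of_le using hX
  choose y' le_y' g not_G_of_le using hY
  refine ⟨f, g, fun x y hxy => ?_⟩
  have hGxy : G (x' x) (y' y) := G_of_le x (y' y) (hxy.trans (le_y' y))
  have hlt : x' x < g y := not_le.mp fun hle => not_G_of_le y (x' x) hle hGxy
  exact (le_x' x).trans hlt.le

theorem lift_cof_le (hG : IsConnection G) :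
    Cardinal.lift.{v} (Order.cof X) ≤ Cardinal.lift.{u} (Order.cof Y) := by
  obtain ⟨f, g, hfg⟩ := hG.exists_le_imp_le
  exact lift_cof_le_of_le_imp_le hfg

end IsConnection

/-- If two linear orders without greatest element are connected,
then they have the same cofinality. -/
theorem cofinality_eq_of_connection {X : Type u} {Y : Type v}
    [LinearOrder X] [LinearOrder Y]
    (hX : ¬ ∃ m : X, ∀ x : X, x ≤ m) (hY : ¬ ∃ m : Y, ∀ y : Y, y ≤ m)
    (hG : ∃ G : X → Y → Prop, IsConnection G) :
    Cardinal.lift.{v} (cofinality X) = Cardinal.lift.{u} (cofinality Y) := by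
  have : NoMaxOrder X := ⟨by simpa only [not_exists, not_forall, not_le] using hX⟩
  have : NoMaxOrder Y := ⟨by simpa only [not_exists, not_forall, not_le] using hY⟩
  obtain ⟨G, hG⟩ := hG
  rw [cofinality_eq_cof, cofinality_eq_cof]
  exact hG.lift_cof_le.antisymm hG.swap_not.lift_cof_le
end

section
/- Let κ be a regular cardinal, let L be a first-order language of cardinality at most κ, and let M be an L-structure of cardinality at most κ. Let <_φ be a linear ordering of the universe of M without greatest element that is definable in M with parameters from M. Then there exists a proper elementary extension N of M such that: (1) M is not <_φ-cofinal in N, i.e., there is b ∈ N with a <_φ^N b for all a ∈ M, where <_φ^N is the relation defined in N by the same formula and parameters as <_φ; and (2) for every linear ordering <_ψ of the universe of M that is definable in M with parameters from M, has cofinality κ, and is not definably connected to <_φ (i.e., no relation definable in M with parameters from M is a connection between (M, <_φ) and (M, <_ψ)), the set M is <_ψ-cofinal in N, i.e., for every b ∈ N there is a ∈ M with b ≤_ψ^N a, where <_ψ^N is the relation defined in N by the same formula and parameters as <_ψ. -/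
open FirstOrder FirstOrder.Language

universe u

/-- A connection between `(X, <ₓ)` and `(Y, <ᵧ)`, for strict linear orders given as relations:
`∃^cf x, ∀^cf y, G x y` and `∃^cf y, ∀^cf x, ¬ G x y`, where `a ≤ b` abbreviates
`a < b ∨ a = b`. -/
def IsConnectionRel {X Y : Type*} (ltx : X → X → Prop) (lty : Y → Y → Prop)
    (G : X → Y → Prop) : Prop :=
  (∀ x₀ : X, ∃ x : X, (ltx x₀ x ∨ x₀ = x) ∧
    ∃ y₀ : Y, ∀ y : Y, (lty y₀ y ∨ y₀ = y) → G x y) ∧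
  (∀ y₀ : Y, ∃ y : Y, (lty y₀ y ∨ y₀ = y) ∧
    ∃ x₀ : X, ∀ x : X, (ltx x₀ x ∨ x₀ = x) → ¬ G x y)

/-- A binary relation on `M` is definable (with parameters from `M`) if it is the set of
realizations in `M` of a first-order `L`-formula with parameters from `M`. -/
def DefinableRel (L : FirstOrder.Language.{u, u}) (M : Type u) [L.Structure M]
    (r : M → M → Prop) : Prop :=
  ∃ (k : ℕ) (χ : L.Formula (Fin k ⊕ Fin 2)) (v : Fin k → M),
    ∀ a b : M, r a b ↔ χ.Realize (Sum.elim v ![a, b])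

/-- The cofinality of a strict linear order `r` on `M`: the least cardinality of a subset of
`M` that is unbounded above with respect to `r`. -/
noncomputable def cofRel {M : Type u} (r : M → M → Prop) : Cardinal.{u} :=
  sInf {c : Cardinal | ∃ S : Set M, (∀ b : M, ∃ y ∈ S, ¬ (r y b ∨ y = b)) ∧
    Cardinal.mk S = c}

/-!
Fix `κ` variables, one of them, `z`, distinguished, and call a set of `L[[M]]`-formulas in these
variables consistent if each of its finite parts is realized in `M` with arbitrarily `<_φ`-large
values of `z`. In `κ` steps, build a consistent set that contains a Henkin axiom for every formula
and, for every `<_ψ` and every variable `x`, a formula `x ≤_ψ a` with `a ∈ M`. It is realized in an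
ultrapower of `M` with `z` above `M`, and by the Henkin axioms the values of the variables form an
elementary substructure `N` of the ultrapower.

A Henkin axiom can be added because fewer than `κ` formulas leave a variable unused. Suppose that
no `x ≤_ψ a` can be added. Each `a` is refuted by a finite part of the set built so far, and since
there are fewer than `κ` finite parts, one of them, with conjunction `τ`, refutes `<_ψ`-cofinally
many `a`. The relation between `z` and `y` that says that some values of the other variables satisfy
`τ ∧ x ≤_ψ y` is then a definable connection between `<_φ` and `<_ψ`.
-/

open Cardinal Filter Set

universe v w

theorem exists_forall_eq_image_Iio {α I : Type*} [Preorder I] [WellFoundedLT I]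
    (pick : Set α → I → α) : ∃ g : I → α, ∀ i, g i = pick (g '' Iio i) i := by
  let g : I → α := (wellFounded_lt (α := I)).fix fun i g =>
    pick (range fun j : Iio i => g j j.2) i
  refine ⟨g, fun i => ?_⟩
  rw [image_eq_range]
  exact wellFounded_lt.fix_eq _ i

theorem image_mem_of_forall_image_Iic_mem {α I : Type*} [LinearOrder I] {C : Set (Set α)}
    (hC : Order.IsOfFiniteCharacter C) (h₀ : ∅ ∈ C) {g : I → α} {A : Set I}
    (hA : ∀ i ∈ A, g '' Iic i ∈ C) : g '' A ∈ C := by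
  refine (hC _).2 fun T hT hTfin => ?_
  obtain ⟨t, htA, htfin, rfl⟩ := exists_subset_image_finite_and.1 ⟨T, hT, hTfin, rfl⟩
  rcases t.eq_empty_or_nonempty with rfl | htne
  · rwa [image_empty]
  obtain ⟨m, hmt, hm⟩ := exists_max_image t id htfin htne
  exact (hC _).1 (hA m (htA hmt)) _ (image_mono hm) (htfin.image g)

theorem exists_mem_forall_inter_nonempty {α I : Type u} {κ : Cardinal.{u}} (hI : #I ≤ κ)
    {C : Set (Set α)} (hC : Order.IsOfFiniteCharacter C) (h₀ : ∅ ∈ C) (D : I → Set α)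
    (hD : ∀ S ∈ C, #S < κ → ∀ i, ∃ s ∈ D i, insert s S ∈ C) :
    ∃ S ∈ C, ∀ i, (D i ∩ S).Nonempty := by
  obtain ⟨_, _, hord⟩ := exists_ord_eq_type_lt I
  have hIio (i : I) : #(Iio i) < κ := (mk_Iio_lt i hord).trans_le hI
  rcases isEmpty_or_nonempty I with hI_empty | ⟨⟨i₀⟩⟩
  · exact ⟨∅, h₀, isEmptyElim⟩
  have : Nonempty α := by
    obtain ⟨s, -⟩ := hD ∅ h₀ (by simpa using zero_le.trans_lt (hIio i₀)) i₀
    exact ⟨s⟩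
  choose! pick hpick_mem hpick_insert using hD
  obtain ⟨g, hg⟩ := exists_forall_eq_image_Iio pick
  have hstage (i : I) : g i ∈ D i ∧ g '' Iic i ∈ C := by
    induction i using WellFoundedLT.induction with
    | ind i ih =>
      have hmem : g '' Iio i ∈ C :=
        image_mem_of_forall_image_Iic_mem hC h₀ fun j hj => (ih j hj).2
      have hcard : #(g '' Iio i) < κ := mk_image_le.trans_lt (hIio i)
      rw [← Iio_insert, image_insert_eq, hg i]
      exact ⟨hpick_mem _ hmem hcard i, hpick_insert _ hmem hcard i⟩
  refine ⟨range g, ?_, fun i => ⟨g i, (hstage i).1, mem_range_self i⟩⟩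
  rw [← image_univ]
  exact image_mem_of_forall_image_Iic_mem hC h₀ fun i _ => (hstage i).2

section Formulas

variable {L : FirstOrder.Language} {M α β : Type*} [L.Structure M]

theorem realize_iff_of_eqOn_freeVarFinset [DecidableEq α] {φ : L.Formula α} {v v' : α → M}
    (h : ∀ a ∈ φ.freeVarFinset, v a = v' a) : φ.Realize v ↔ φ.Realize v' := by
  have hv := BoundedFormula.realize_restrictFreeVar (φ := φ) (f := Subtype.val) (v := v)
    (xs := default) v fun _ => rfl
  have hv' := BoundedFormula.realize_restrictFreeVar (φ := φ) (f := Subtype.val) (v := v)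
    (xs := default) v' fun a => h a a.2
  exact hv.symm.trans hv'

theorem realize_subst_pair {φ : L.Formula (Fin 2)} {s t : L.Term α} {v : α → M} :
    Formula.Realize (φ.subst ![s, t]) v ↔ φ.Realize ![s.realize v, t.realize v] := by
  have hvec : (fun i => (![s, t] i).realize v) = ![s.realize v, t.realize v] :=
    funext (Fin.forall_fin_two.2 ⟨rfl, rfl⟩)
  rw [Formula.Realize, BoundedFormula.realize_subst, hvec, Formula.Realize]

theorem exists_formula_realize_iff_exists [Nonempty M] (σ : L.Formula (α ⊕ β)) :
    ∃ τ : L.Formula α, ∀ u : α → M, τ.Realize u ↔ ∃ w : β → M, σ.Realize (Sum.elim u w) := by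
  classical
  -- `β` may be infinite, so only its variables occurring in `σ` are quantified; all the others
  -- are sent to `none`.
  let s := σ.freeVarFinset.toRight
  let g : β → Option s := fun b => if hb : b ∈ s then some ⟨b, hb⟩ else none
  refine ⟨(σ.relabel (Sum.map id g)).iExs (Option s), fun u => ?_⟩
  simp only [Formula.realize_iExs, Formula.realize_relabel, Sum.elim_comp_map, Function.comp_id]
  refine ⟨fun ⟨w, hw⟩ => ⟨w ∘ g, hw⟩, fun ⟨w, hw⟩ => ?_⟩
  refine ⟨fun o => o.elim (Classical.arbitrary M) fun b => w b, ?_⟩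
  refine (realize_iff_of_eqOn_freeVarFinset ?_).1 hw
  rintro (a | b) hb
  · rfl
  · have hbs : b ∈ s := Finset.mem_toRight.2 hb
    simp [g, hbs]

theorem exists_formula_realize_iff_exists_assignment [Nonempty M] (τ : L.Formula α)
    (ρ : L.Formula (Fin 2)) (a₀ a : α) :
    ∃ χ : L.Formula (Fin 2), ∀ x y : M,
      χ.Realize ![x, y] ↔ ∃ w : α → M, w a₀ = x ∧ τ.Realize w ∧ ρ.Realize ![w a, y] := by
  let σ : L.Formula (Fin 2 ⊕ α) :=
    (Term.var (Sum.inr a₀)).equal (Term.var (Sum.inl 0)) ⊓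
      (τ.relabel Sum.inr ⊓ ρ.relabel ![Sum.inr a, Sum.inl 1])
  have hσ (x y : M) (w : α → M) : σ.Realize (Sum.elim ![x, y] w) ↔
      w a₀ = x ∧ τ.Realize w ∧ ρ.Realize ![w a, y] := by
    have hvec : Sum.elim ![x, y] w ∘ ![Sum.inr a, Sum.inl 1] = ![w a, y] :=
      funext (Fin.forall_fin_two.2 ⟨rfl, rfl⟩)
    simp [σ, hvec]
  obtain ⟨χ, hχ⟩ := exists_formula_realize_iff_exists (M := M) σ
  exact ⟨χ, fun x y => by simp only [hχ, hσ]⟩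

theorem mk_formula_le {L : FirstOrder.Language.{u, v}} {α : Type w} {κ : Cardinal.{max u v w}}
    (hκ : ℵ₀ ≤ κ) (hα : lift.{max u v} #α ≤ κ) (hL : lift.{w} L.card ≤ κ) :
    #(L.Formula α) ≤ κ := by
  have hinj : Function.Injective fun φ : L.Formula α => (⟨0, φ⟩ : Σ n, L.BoundedFormula α n) :=
    fun _ _ h => eq_of_heq (Sigma.mk.inj h).2
  refine (mk_le_of_injective hinj).trans (BoundedFormula.card_le.trans (max_le hκ ?_))
  exact add_le_of_le hκ hα hL

end Formulas

section Consistency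

variable {L : FirstOrder.Language} {M α : Type*} [L.Structure M] {𝓕 : Filter (α → M)}
  {S : Set (L.Formula α)}

/-- A set `S` of formulas is consistent along a filter `𝓕` of assignments if every finite part of
`S` is realized by `𝓕`-frequently many assignments. In the application `𝓕` says that one
distinguished variable is large. -/
def ConsistentAlong (𝓕 : Filter (α → M)) (S : Set (L.Formula α)) : Prop :=
  ∀ T ⊆ S, T.Finite → ∃ᶠ w in 𝓕, ∀ σ ∈ T, σ.Realize w

theorem isOfFiniteCharacter_consistentAlong (𝓕 : Filter (α → M)) :
    Order.IsOfFiniteCharacter {S : Set (L.Formula α) | ConsistentAlong 𝓕 S} := fun _ =>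
  ⟨fun hS _ hT _ R hR hRfin => hS R (hR.trans hT) hRfin,
    fun h T hT hTfin => h T hT hTfin T Subset.rfl hTfin⟩

theorem consistentAlong_empty [𝓕.NeBot] : ConsistentAlong 𝓕 (∅ : Set (L.Formula α)) := by
  intro T hT _
  simpa [subset_empty_iff.1 hT] using ‹𝓕.NeBot›

theorem consistentAlong_insert {τ : L.Formula α} :
    ConsistentAlong 𝓕 (insert τ S) ↔
      ∀ T ⊆ S, T.Finite → ∃ᶠ w in 𝓕, τ.Realize w ∧ ∀ σ ∈ T, σ.Realize w := by
  refine ⟨fun h T hT hTfin => ?_, fun h T hT hTfin => ?_⟩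
  · simpa only [forall_mem_insert] using h _ (insert_subset_insert hT) (hTfin.insert τ)
  · refine (h (T \ {τ}) (sdiff_singleton_subset_iff.2 hT) hTfin.sdiff).mono fun w hw σ hσ => ?_
    by_cases hστ : σ = τ
    · exact hστ ▸ hw.1
    · exact hw.2 σ ⟨hσ, hστ⟩

theorem ConsistentAlong.exists_ultrafilter (hS : ConsistentAlong 𝓕 S) :
    ∃ U : Ultrafilter (α → M), ↑U ≤ 𝓕 ∧ ∀ σ ∈ S, ∀ᶠ w in (U : Filter (α → M)), σ.Realize w := by
  let realizations (σ : L.Formula α) : Set (α → M) := {w | σ.Realize w}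
  have hne : (𝓕 ⊓ generate (realizations '' S)).NeBot := by
    refine inf_neBot_iff_frequently_right.2 fun {p} hp => ?_
    obtain ⟨t, htS, htfin, htp⟩ := mem_generate_iff.1 hp
    obtain ⟨T, hTS, hTfin, rfl⟩ := exists_subset_image_finite_and.1 ⟨t, htS, htfin, rfl⟩
    exact (hS T hTS hTfin).mono fun w hw => htp (by simpa [realizations] using hw)
  obtain ⟨U, hU⟩ := Ultrafilter.exists_le (𝓕 ⊓ generate (realizations '' S))
  exact ⟨U, hU.trans inf_le_left, fun σ hσ =>
    hU.trans inf_le_right (mem_generate_of_mem (mem_image_of_mem _ hσ))⟩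

end Consistency

section Henkin

variable {L : FirstOrder.Language} {M : Type v} {α : Type w} [L.Structure M]

/-- The Henkin axiom `(∃ y, θ(y)) → θ(x_a)`, which makes the variable `a` a witness for `θ`. -/
noncomputable def henkinFormula (θ : L.Formula (α ⊕ Fin 1)) (a : α) : L.Formula α :=
  (θ.iExs (Fin 1)).imp (θ.relabel (Sum.elim id fun _ => a))

theorem realize_henkinFormula {θ : L.Formula (α ⊕ Fin 1)} {a : α} {v : α → M} :
    (henkinFormula θ a).Realize v ↔
      ((∃ y, θ.Realize (Sum.elim v y)) → θ.Realize (Sum.elim v fun _ => v a)) := by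
  simp only [henkinFormula, Formula.realize_imp, Formula.realize_iExs, Formula.realize_relabel,
    Sum.comp_elim, Function.comp_id]
  rfl

theorem meetsDefinable_range {v : α → M}
    (hv : ∀ θ : L.Formula (α ⊕ Fin 1), ∃ a, (henkinFormula θ a).Realize v) :
    L.MeetsDefinable (range v) := by
  rintro D ⟨x, hx⟩ hD
  obtain ⟨φ, hφ⟩ := definable_iff_exists_formula_sum.1 hD
  let θ : L.Formula (α ⊕ Fin 1) := φ.relabel (Sum.map (fun y => y.2.choose) id)
  have hθ (y : Fin 1 → M) : θ.Realize (Sum.elim v y) ↔ y 0 ∈ D := by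
    have hy : y 0 ∈ D ↔ φ.Realize (Sum.elim (↑) y) := Set.ext_iff.1 hφ y
    have hval : v ∘ (fun y : range v => y.2.choose) = (↑) := funext fun y => y.2.choose_spec
    rw [hy, Formula.realize_relabel, Sum.elim_comp_map, hval, Function.comp_id]
  obtain ⟨a, ha⟩ := hv θ
  rw [realize_henkinFormula] at ha
  exact ⟨v a, (hθ _).1 (ha ⟨fun _ => x, (hθ _).2 hx⟩), mem_range_self a⟩

theorem exists_surjective_realize_of_henkin [Nonempty M] {𝓕 : Filter (α → M)}
    {S : Set (L.Formula α)} (hS : ConsistentAlong 𝓕 S)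
    (hS_henkin : ∀ θ : L.Formula (α ⊕ Fin 1), ∃ a, henkinFormula θ a ∈ S) :
    ∃ (N : Type (max v w)) (_ : L.Structure N) (val : α → N), (M ≅[L] N) ∧
      Function.Surjective val ∧ (∀ σ ∈ S, σ.Realize val) ∧
        ∀ σ : L.Formula α, (∀ᶠ w in 𝓕, σ.Realize w) → σ.Realize val := by
  obtain ⟨U, hU𝓕, hUS⟩ := hS.exists_ultrafilter
  let P := (U : Filter (α → M)).Product fun _ => M
  let v : α → P := fun a => ((fun w => w a : (α → M) → M) : P)
  have hlos (σ : L.Formula α) : σ.Realize v ↔ ∀ᶠ w in (U : Filter (α → M)), σ.Realize w :=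
    Ultraproduct.realize_formula_cast (M := fun _ : α → M => M) σ fun a w => w a
  have hMP : M ≅[L] P := by
    refine elementarilyEquivalent_iff.2 fun σ => ?_
    rw [Ultraproduct.sentence_realize, eventually_const]
  have hmeets : L.MeetsDefinable (range v) := meetsDefinable_range fun θ =>
    (hS_henkin θ).imp fun a ha => (hlos _).2 (hUS _ ha)
  let E := hmeets.toElementarySubstructure
  have hE : (E : Set P) = range v := hmeets.closure_eq_self
  have hmem (a : α) : v a ∈ E := hE.ge (mem_range_self a)
  have hrealize (σ : L.Formula α) : σ.Realize (fun a => (⟨v a, hmem a⟩ : E)) ↔ σ.Realize v :=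
    (E.subtype.map_formula σ _).symm
  refine ⟨E, inferInstance, fun a => ⟨v a, hmem a⟩, ?_, ?_, ?_, ?_⟩
  · exact hMP.trans E.elementarilyEquivalent.symm
  · rintro ⟨x, hx⟩
    obtain ⟨a, rfl⟩ := hE.le hx
    exact ⟨a, rfl⟩
  · exact fun σ hσ => (hrealize σ).2 ((hlos σ).2 (hUS σ hσ))
  · exact fun σ hσ => (hrealize σ).2 ((hlos σ).2 (hU𝓕 hσ))

end Henkin

section FreshVariable

theorem exists_notMem_forall_notMem {ι α : Type u} [Infinite α] (hι : #ι < #α) (t : Finset α)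
    (s : ι → Finset α) : ∃ a ∉ t, ∀ j, a ∉ s j := by
  have hunion : #(⋃ j, (s j : Set α)) < #α := by
    rcases finite_or_infinite ι with hfin | hinf
    · exact (finite_iUnion fun j => (s j).finite_toSet).lt_aleph0.trans_le (aleph0_le_mk α)
    · have hs : ⨆ j, #(s j : Set α) ≤ ℵ₀ := ciSup_le' fun j => (s j).finite_toSet.lt_aleph0.le
      calc #(⋃ j, (s j : Set α)) ≤ #ι * ⨆ j, #(s j : Set α) := mk_iUnion_le _
        _ ≤ #ι * ℵ₀ := mul_le_mul_right hs _
        _ = #ι := mul_aleph0_eq (aleph0_le_mk ι)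
        _ < #α := hι
  have ht : #(t : Set α) < #α := t.finite_toSet.lt_aleph0.trans_le (aleph0_le_mk α)
  have hlt : #(↑(↑t ∪ ⋃ j, (s j : Set α)) : Type u) < #α :=
    (mk_union_le _ _).trans_lt (add_lt_of_lt (aleph0_le_mk α) ht hunion)
  have hne : (↑t ∪ ⋃ j, (s j : Set α)) ≠ Set.univ := fun h => hlt.ne (by rw [h, mk_univ])
  simpa [ne_univ_iff_exists_notMem] using hne

variable {L : FirstOrder.Language.{u, u}} {M : Type v} {α : Type u} [L.Structure M]
  {𝒢 : Filter M} {a₀ : α} {S : Set (L.Formula α)}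

theorem ConsistentAlong.exists_insert_henkinFormula [Nonempty M] [Infinite α]
    (hS : ConsistentAlong (comap (fun w : α → M => w a₀) 𝒢) S) (hcard : #S < #α)
    (θ : L.Formula (α ⊕ Fin 1)) :
    ∃ a, ConsistentAlong (comap (fun w : α → M => w a₀) 𝒢) (insert (henkinFormula θ a) S) := by
  classical
  obtain ⟨a, ha, haS⟩ := exists_notMem_forall_notMem hcard
    (insert a₀ θ.freeVarFinset.toLeft) fun σ : S => σ.1.freeVarFinset
  obtain ⟨ha₀, haθ⟩ : a ≠ a₀ ∧ Sum.inl a ∉ θ.freeVarFinset := by simpa using ha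
  refine ⟨a, consistentAlong_insert.2 fun T hT hTfin => ?_⟩
  refine frequently_comap.2 ((frequently_comap.1 (hS T hT hTfin)).mono ?_)
  rintro _ ⟨w, rfl, hw⟩
  obtain ⟨y, hy⟩ : ∃ y : M, (∃ z, θ.Realize (Sum.elim w z)) →
      θ.Realize (Sum.elim w fun _ => y) := by
    by_cases hex : ∃ z, θ.Realize (Sum.elim w z)
    · obtain ⟨z, hz⟩ := hex
      exact ⟨z 0, fun _ => by rwa [← funext fun i => congrArg z (Subsingleton.elim i 0)]⟩
    · exact ⟨Classical.arbitrary M, fun h => (hex h).elim⟩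
  have hθ (z : Fin 1 → M) :
      θ.Realize (Sum.elim (Function.update w a y) z) ↔ θ.Realize (Sum.elim w z) := by
    refine realize_iff_of_eqOn_freeVarFinset ?_
    rintro (b | b) hb
    · have hba : b ≠ a := fun h => haθ (by rwa [← h])
      exact Function.update_of_ne hba _ _
    · rfl
  refine ⟨Function.update w a y, Function.update_of_ne ha₀.symm _ _, ?_, fun σ hσ => ?_⟩
  · simpa only [realize_henkinFormula, hθ, Function.update_self] using hy
  · refine (realize_iff_of_eqOn_freeVarFinset fun b hb => ?_).1 (hw σ hσ)
    exact (Function.update_of_ne (ne_of_mem_of_not_mem hb (haS ⟨σ, hT hσ⟩)) _ _).symm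

end FreshVariable

section TailFilter

variable {X Y : Type*}

/-- The filter generated by the tails `{x | r a x}` of a relation `r`: a set is large if it
contains all sufficiently `r`-large points. -/
def tailFilter (r : X → X → Prop) : Filter X :=
  ⨅ a, 𝓟 {x | r a x}

theorem setOf_mem_tailFilter (r : X → X → Prop) (a : X) : {x | r a x} ∈ tailFilter r :=
  mem_iInf_of_mem a (mem_principal_self _)

theorem hasBasis_tailFilter [Nonempty X] (r : X → X → Prop) [IsTrans X r] [IsDirected X r] :
    (tailFilter r).HasBasis (fun _ => True) fun a => {x | r a x} :=
  hasBasis_iInf_principal fun a b =>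
    (directed_of r a b).imp fun _ hc => ⟨fun _ => trans_of r hc.1, fun _ => trans_of r hc.2⟩

theorem tailFilter_neBot [Nonempty X] (r : X → X → Prop) [IsTrans X r] [IsDirected X r] :
    (tailFilter r).NeBot :=
  (hasBasis_tailFilter r).neBot_iff.2 fun {a} _ => (directed_of r a a).imp fun _ h => h.1

theorem isDirected_of_forall_exists {r : X → X → Prop} [IsTrans X r] [Std.Trichotomous r]
    (hr : ∀ a, ∃ b, r a b) : IsDirected X r where
  directed a b := by
    rcases trichotomous_of r a b with hab | rfl | hba
    · exact (hr b).imp fun _ hbc => ⟨trans_of r hab hbc, hbc⟩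
    · exact (hr a).imp fun _ hac => ⟨hac, hac⟩
    · exact (hr a).imp fun _ hac => ⟨hac, trans_of r hba hac⟩

theorem isConnectionRel_of_frequently_of_eventually [Nonempty X] {ltx : X → X → Prop}
    {lty : Y → Y → Prop} [IsTrans X ltx] [IsDirected X ltx] {G : X → Y → Prop}
    (hG : ∃ᶠ x in tailFilter ltx, ∃ y₀, ∀ y, lty y₀ y ∨ y₀ = y → G x y)
    (hG' : ∀ y₀, ∃ y, lty y₀ y ∧ ∀ᶠ x in tailFilter ltx, ¬ G x y) :
    IsConnectionRel ltx lty G := by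
  refine ⟨fun x₀ => ?_, fun y₀ => ?_⟩
  · obtain ⟨x, hGx, hx⟩ := (hG.and_eventually (setOf_mem_tailFilter ltx x₀)).exists
    exact ⟨x, Or.inl hx, hGx⟩
  · obtain ⟨y, hy, hGy⟩ := hG' y₀
    obtain ⟨x₀, -, hx₀⟩ := (hasBasis_tailFilter ltx).eventually_iff.1 hGy
    obtain ⟨x₁, hx₀₁, -⟩ := directed_of ltx x₀ x₀
    refine ⟨y, Or.inl hy, x₁, ?_⟩
    rintro x (hx | rfl)
    · exact hx₀ (trans_of ltx hx₀₁ hx)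
    · exact hx₀ hx₀₁

end TailFilter

section CardinalDirected

variable {X : Type u} {r : X → X → Prop} {κ : Cardinal.{u}}

/-- A relation is `κ`-directed if every set of fewer than `κ` points has an upper bound; for a
strict linear order without greatest element this says that its cofinality is at least `κ`. -/
def IsCardinalDirected (κ : Cardinal.{u}) (r : X → X → Prop) : Prop :=
  ∀ S : Set X, #S < κ → ∃ b, ∀ a ∈ S, r a b

theorem isCardinalDirected_cofRel [IsTrans X r] [Std.Trichotomous r] :
    IsCardinalDirected (cofRel r) r := by
  intro S hS
  obtain ⟨_, T, hT, -⟩ : {c | ∃ T : Set X, (∀ b, ∃ y ∈ T, ¬ (r y b ∨ y = b)) ∧ #T = c}.Nonempty :=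
    nonempty_iff_ne_empty.2 fun h => by
      rw [cofRel, h, Cardinal.sInf_empty] at hS
      exact not_lt_zero hS
  have hlarger (b : X) : ∃ c, r b c := by
    obtain ⟨c, -, hc⟩ := hT b
    obtain ⟨hcb, hne⟩ := not_or.1 hc
    exact ⟨c, (trichotomous_of r b c).resolve_right fun h => h.elim (fun h => hne h.symm) hcb⟩
  by_contra! hunbounded
  refine hS.not_ge (csInf_le' ⟨S, fun b => ?_, rfl⟩)
  obtain ⟨c, hbc⟩ := hlarger b
  obtain ⟨a, ha, hac⟩ := hunbounded c
  refine ⟨a, ha, ?_⟩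
  rintro (hab | rfl)
  · exact hac (trans_of r hab hbc)
  · exact hac hbc

theorem IsCardinalDirected.exists_fiber_cofinal {Y : Type u} (hr : IsCardinalDirected κ r)
    (hY : #Y < κ) (F : X → Y) : ∃ y, ∀ a₀, ∃ a, r a₀ a ∧ F a = y := by
  by_contra! h
  choose bound hbound using h
  obtain ⟨c, hc⟩ := hr (range bound) (mk_range_le.trans_lt hY)
  exact hbound (F c) c (hc _ (mem_range_self _)) rfl

theorem mk_finset_lt (hκ : ℵ₀ ≤ κ) (hX : #X < κ) : #(Finset X) < κ := by
  rcases finite_or_infinite X with hfin | hinf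
  · exact (lt_aleph0_of_finite _).trans_le hκ
  · rwa [mk_finset_of_infinite]

end CardinalDirected

section Bounding

variable {L : FirstOrder.Language.{u, u}} {M α : Type u} [L.Structure M]

theorem ConsistentAlong.exists_forall_exists_eventually_not_realize {X : Type u}
    {𝓕 : Filter (α → M)} {S : Set (L.Formula α)} {κ : Cardinal.{u}} {r : X → X → Prop}
    (hS : ConsistentAlong 𝓕 S) (hκ : ℵ₀ ≤ κ) (hcard : #S < κ) (hr : IsCardinalDirected κ r)
    {δ : X → L.Formula α} (hδ : ∀ a, ¬ ConsistentAlong 𝓕 (insert (δ a) S)) :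
    ∃ τ : L.Formula α, (∃ᶠ w in 𝓕, τ.Realize w) ∧
      ∀ a₀, ∃ a, r a₀ a ∧ ∀ᶠ w in 𝓕, τ.Realize w → ¬ (δ a).Realize w := by
  classical
  have hrefute (a : X) : ∃ t : Finset S,
      ∀ᶠ w in 𝓕, (∀ σ ∈ t, σ.1.Realize w) → ¬ (δ a).Realize w := by
    by_contra! hfreq
    refine hδ a (consistentAlong_insert.2 fun T hT hTfin => ?_)
    refine (hfreq (hTfin.toFinset.subtype (· ∈ S))).mono fun w hw => ?_
    exact ⟨hw.2, fun σ hσ => hw.1 ⟨σ, hT hσ⟩ (by simpa using hσ)⟩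
  choose t ht using hrefute
  obtain ⟨s, hs⟩ := hr.exists_fiber_cofinal (mk_finset_lt hκ hcard) t
  refine ⟨Formula.iInf fun σ : s => σ.1.1, ?_, fun a₀ => ?_⟩
  · refine (hS (Subtype.val '' (s : Set S)) (by simp) (s.finite_toSet.image _)).mono ?_
    intro w hw
    simpa using hw
  · obtain ⟨a, ha, rfl⟩ := hs a₀
    exact ⟨a, ha, by simpa using ht a⟩

/-- The formula `ρ(x, y)` defines the reflexive closure `x ≤ y` of a `κ`-directed relation that
is not connected to `ltφ` by a definable relation. Definability is without parameters in `L`, which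
will be `L[[M]]`. -/
def DefinesUnconnected (κ : Cardinal.{u}) (ltφ : M → M → Prop) (ρ : L.Formula (Fin 2)) : Prop :=
  ∃ ltψ : M → M → Prop, IsCardinalDirected κ ltψ ∧
    (∀ x y : M, ρ.Realize ![x, y] ↔ ltψ x y ∨ x = y) ∧
    ∀ χ : L.Formula (Fin 2), ¬ IsConnectionRel ltφ ltψ fun x y => χ.Realize ![x, y]

theorem ConsistentAlong.exists_insert_of_definesUnconnected [Nonempty M]
    {ltφ : M → M → Prop} [IsTrans M ltφ] [IsDirected M ltφ] {a₀ a : α}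
    {S : Set (L.Formula α)} {κ : Cardinal.{u}} {ρ : L.Formula (Fin 2)} {δ : M → L.Formula α}
    (hS : ConsistentAlong (comap (fun w : α → M => w a₀) (tailFilter ltφ)) S) (hκ : ℵ₀ ≤ κ)
    (hcard : #S < κ) (hρ : DefinesUnconnected κ ltφ ρ)
    (hδ : ∀ c (w : α → M), (δ c).Realize w ↔ ρ.Realize ![w a, c]) :
    ∃ c, ConsistentAlong (comap (fun w : α → M => w a₀) (tailFilter ltφ)) (insert (δ c) S) := by
  obtain ⟨ltψ, hψ, hρψ, hconn⟩ := hρ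
  by_contra! hincons
  obtain ⟨τ, hτ, hrefute⟩ :=
    hS.exists_forall_exists_eventually_not_realize hκ hcard hψ hincons
  obtain ⟨χ, hχ⟩ := exists_formula_realize_iff_exists_assignment (M := M) τ ρ a₀ a
  refine hconn χ (isConnectionRel_of_frequently_of_eventually ?_ fun y₀ => ?_)
  · refine (frequently_comap.1 hτ).mono fun x ⟨w, hwx, hwτ⟩ => ⟨w a, fun y hy => ?_⟩
    exact (hχ x y).2 ⟨w, hwx, hwτ, (hρψ _ _).2 hy⟩
  · obtain ⟨y, hy, hev⟩ := hrefute y₀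
    refine ⟨y, hy, (eventually_comap.1 hev).mono fun x hx hG => ?_⟩
    obtain ⟨w, hwx, hwτ, hwρ⟩ := (hχ x y).1 hG
    exact hx w hwx hwτ ((hδ y w).2 hwρ)

end Bounding

section Omitting

variable {L : FirstOrder.Language.{u, u}} {M α : Type u} [L.Structure M]

theorem exists_elementarilyEquivalent_forall_exists_realize [Nonempty M] {J : Type u}
    {𝒢 : Filter M} [𝒢.NeBot] {κ : Cardinal.{u}} (hκ : ℵ₀ ≤ κ) (hL : L.card ≤ κ) (hJ : #J ≤ κ)
    (hα : #α = κ) (a₀ : α) (Δ : J → Set (L.Formula (Fin 1)))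
    (hΔ : ∀ S, ConsistentAlong (comap (fun w : α → M => w a₀) 𝒢) S → #S < κ → ∀ j a,
      ∃ δ ∈ Δ j, ConsistentAlong (comap (fun w : α → M => w a₀) 𝒢)
        (insert (δ.relabel fun _ => a) S)) :
    ∃ (N : Type u) (_ : L.Structure N) (c : N), (M ≅[L] N) ∧
      (∀ χ : L.Formula (Fin 1), (∀ᶠ x in 𝒢, χ.Realize fun _ => x) → χ.Realize fun _ => c) ∧
      ∀ j (b : N), ∃ δ ∈ Δ j, δ.Realize fun _ => b := by
  have : Infinite α := infinite_iff.2 (hκ.trans_eq hα.symm)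
  have : (comap (fun w : α → M => w a₀) 𝒢).NeBot :=
    ‹𝒢.NeBot›.comap_of_surj (Function.surjective_eval a₀)
  let D : L.Formula (α ⊕ Fin 1) ⊕ J × α → Set (L.Formula α) :=
    Sum.elim (fun θ => range (henkinFormula θ))
      fun p => (fun δ => δ.relabel fun _ => p.2) '' Δ p.1
  have hcard : #(L.Formula (α ⊕ Fin 1) ⊕ J × α) ≤ κ := by
    have hvars : #(α ⊕ Fin 1) ≤ κ := by
      simpa [hα] using add_le_of_le hκ le_rfl (one_le_aleph0.trans hκ)
    rw [mk_sum, lift_id, lift_id, mk_prod, lift_id, lift_id]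
    exact add_le_of_le hκ (mk_formula_le hκ (by simpa using hvars) (by simpa using hL))
      (mul_le_of_le hκ hJ hα.le)
  obtain ⟨S, hS, hSD⟩ := exists_mem_forall_inter_nonempty hcard
    (isOfFiniteCharacter_consistentAlong (L := L) (comap (fun w : α → M => w a₀) 𝒢))
    consistentAlong_empty D fun S hS hScard i => by
      rcases i with θ | ⟨j, a⟩
      · simpa [D] using hS.exists_insert_henkinFormula (hScard.trans_eq hα.symm) θ
      · simpa [D] using hΔ S hS hScard j a
  have hS_henkin (θ : L.Formula (α ⊕ Fin 1)) : ∃ a, henkinFormula θ a ∈ S := by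
    obtain ⟨_, ⟨a, rfl⟩, ha⟩ := hSD (Sum.inl θ)
    exact ⟨a, ha⟩
  obtain ⟨N, _, val, hMN, hval, hvalS, hval𝓕⟩ := exists_surjective_realize_of_henkin hS hS_henkin
  refine ⟨N, _, val a₀, hMN, fun χ hχ => ?_, fun j b => ?_⟩
  · exact Formula.realize_relabel.1 (hval𝓕 (χ.relabel fun _ => a₀)
      ((hχ.comap _).mono fun _ => Formula.realize_relabel.2))
  · obtain ⟨a, rfl⟩ := hval b
    obtain ⟨_, ⟨δ, hδ, rfl⟩, hδS⟩ := hSD (Sum.inr (j, a))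
    exact ⟨δ, hδ, Formula.realize_relabel.1 (hvalS _ hδS)⟩

end Omitting

section Parameters

variable {L : FirstOrder.Language} {M N α β : Type*}

/-- The `L[[M]]`-formula obtained from `χ` by substituting the parameters `v` for its first block
of free variables. -/
def withParameters (χ : L.Formula (α ⊕ β)) (v : α → M) : L[[M]].Formula β :=
  BoundedFormula.constantsVarsEquiv.symm (χ.relabel (Sum.map v id))

theorem con_self_eq [L.Structure M] (a : M) : (L.con a : M) = a :=
  rfl

theorem realize_withParameters [L.Structure N] [L[[M]].Structure N]
    [(L.lhomWithConstants M).IsExpansionOn N] {χ : L.Formula (α ⊕ β)} {v : α → M} {x : β → N} :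
    (withParameters χ v).Realize x ↔ χ.Realize (Sum.elim (fun i => (L.con (v i) : N)) x) := by
  rw [Formula.Realize, ← BoundedFormula.realize_constantsVarsEquiv, withParameters,
    Equiv.apply_symm_apply]
  exact Formula.realize_relabel.trans (by rw [Sum.elim_comp_map]; rfl)

theorem exists_elementaryEmbedding_con [L.Structure M] [L[[M]].Structure N] (h : M ≅[L[[M]]] N) :
    ∃ _ : L.Structure N, (L.lhomWithConstants M).IsExpansionOn N ∧
      ∃ f : M ↪ₑ[L] N, ∀ a, f a = (L.con a : N) := by
  let _ : L.Structure N := (L.lhomWithConstants M).reduct N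
  have hexp : (L.lhomWithConstants M).IsExpansionOn N := LHom.isExpansionOn_reduct _ _
  have : N ⊨ L.elementaryDiagram M := h.theory_model
  exact ⟨_, hexp, ElementaryEmbedding.ofModelsElementaryDiagram L M N, fun _ => rfl⟩

end Parameters

section Extension

variable {L : FirstOrder.Language.{u, u}} {M : Type u} [L.Structure M]

theorem definableRel_realize (χ : L[[M]].Formula (Fin 2)) :
    DefinableRel L M fun a b => χ.Realize ![a, b] := by
  have hdef : (Set.univ : Set M).Definable L {x : Fin 2 → M | χ.Realize x} := by
    let χ' : L.Formula (M ⊕ Fin 2) := BoundedFormula.constantsVarsEquiv χ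
    refine definable_iff_exists_formula_sum.2
      ⟨χ'.relabel (Sum.map (fun m => ⟨m, mem_univ m⟩) id), ?_⟩
    ext x
    rw [mem_ofPred_eq, mem_ofPred_eq, Formula.realize_relabel, Sum.elim_comp_map]
    exact BoundedFormula.realize_constantsVarsEquiv.symm
  obtain ⟨A, -, hA⟩ := definable_iff_finitely_definable.1 hdef
  obtain ⟨σ, hσ⟩ := definable_iff_exists_formula_sum.1 hA
  refine ⟨A.card, σ.relabel (Sum.map A.equivFin id), fun i => A.equivFin.symm i, fun a b => ?_⟩
  have hval : (fun i => (A.equivFin.symm i : M)) ∘ A.equivFin = ((↑) : A → M) :=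
    funext fun a => by simp
  rw [Formula.realize_relabel, Sum.elim_comp_map, hval]
  exact Set.ext_iff.1 hσ ![a, b]

theorem exists_elementarilyEquivalent_withConstants [Nonempty M]
    {κ : Cardinal.{u}} (hκ : ℵ₀ ≤ κ) (hM : #M ≤ κ) (hL : L.card ≤ κ) (ltφ : M → M → Prop)
    [IsTrans M ltφ] [IsDirected M ltφ] :
    ∃ (N : Type u) (_ : L[[M]].Structure N) (c : N), (M ≅[L[[M]]] N) ∧
      (∀ χ : L[[M]].Formula (Fin 1), (∀ᶠ x in tailFilter ltφ, χ.Realize fun _ => x) →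
        χ.Realize fun _ => c) ∧
      ∀ ρ : L[[M]].Formula (Fin 2), DefinesUnconnected κ ltφ ρ →
        ∀ b : N, ∃ a : M, ρ.Realize ![b, (L.con a : N)] := by
  have hLM : L[[M]].card ≤ κ := by
    simpa [card_withConstants] using add_le_of_le hκ hL hM
  have hJ : #{ρ : L[[M]].Formula (Fin 2) // DefinesUnconnected κ ltφ ρ} ≤ κ :=
    (mk_subtype_le _).trans
      (mk_formula_le hκ (by simpa using ofNat_le_aleph0.trans hκ) (by simpa using hLM))
  have := tailFilter_neBot ltφ
  obtain ⟨a₀⟩ : Nonempty κ.out := mk_ne_zero_iff.1 (by simpa using (aleph0_pos.trans_le hκ).ne')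
  let upperBound (ρ : L[[M]].Formula (Fin 2)) (m : M) : L[[M]].Formula (Fin 1) :=
    ρ.subst ![Term.var 0, (L.con m).term]
  obtain ⟨N, _, c, hMN, hc, hbound⟩ := exists_elementarilyEquivalent_forall_exists_realize
    hκ hLM hJ κ.mk_out a₀ (fun ρ => range (upperBound ρ.1)) fun S hS hcard ρ a => by
      simpa only [exists_range_iff] using hS.exists_insert_of_definesUnconnected
        (a := a) (δ := fun m => (upperBound ρ.1 m).relabel fun _ => a) hκ hcard ρ.2
        fun m w => by simp [upperBound, realize_subst_pair, con_self_eq]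
  refine ⟨N, _, c, hMN, hc, fun ρ hρ b => ?_⟩
  obtain ⟨_, ⟨a, rfl⟩, ha⟩ := hbound ⟨ρ, hρ⟩ b
  exact ⟨a, by simpa [upperBound, realize_subst_pair] using ha⟩

end Extension

theorem exists_elementary_extension_general {L : FirstOrder.Language.{u, u}} {M : Type u}
    [Nonempty M] [L.Structure M] (κ : Cardinal.{u}) (hκ : ℵ₀ ≤ κ)
    (hM : #M ≤ κ) (hL : L.card ≤ κ)
    (kφ : ℕ) (φfml : L.Formula (Fin kφ ⊕ Fin 2)) (vφ : Fin kφ → M)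
    (ltφ : M → M → Prop)
    (hφdef : ∀ a b : M, ltφ a b ↔ φfml.Realize (Sum.elim vφ ![a, b]))
    [IsStrictOrder M ltφ] [IsDirected M ltφ] :
    ∃ (N : Type u) (_ : L.Structure N) (f : M ↪ₑ[L] N),
      ¬ Function.Surjective (f : M → N) ∧
      (∃ b : N, ∀ a : M, φfml.Realize (Sum.elim (fun i => f (vφ i)) ![f a, b])) ∧
      (∀ (kψ : ℕ) (ψfml : L.Formula (Fin kψ ⊕ Fin 2)) (vψ : Fin kψ → M)
        (ltψ : M → M → Prop),
        (∀ a b : M, ltψ a b ↔ ψfml.Realize (Sum.elim vψ ![a, b])) →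
        IsCardinalDirected κ ltψ →
        (∀ G : M → M → Prop, DefinableRel L M G → ¬ IsConnectionRel ltφ ltψ G) →
        ∀ b : N, ∃ a : M,
          ψfml.Realize (Sum.elim (fun i => f (vψ i)) ![b, f a]) ∨ b = f a) := by
  obtain ⟨N, _, c, hMN, hc, hbound⟩ :=
    exists_elementarilyEquivalent_withConstants hκ hM hL ltφ
  obtain ⟨_, _, f, hf⟩ := exists_elementaryEmbedding_con hMN
  have hlarge (a : M) : φfml.Realize (Sum.elim (fun i => f (vφ i)) ![f a, c]) := by
    have hlower := hc ((withParameters φfml vφ).subst ![(L.con a).term, Term.var 0])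
    simp only [realize_subst_pair, realize_withParameters, Term.realize_constants,
      Term.realize_var, con_self_eq, ← hf, ← hφdef] at hlower
    exact hlower (setOf_mem_tailFilter ltφ a)
  refine ⟨N, _, f, fun hsurj => ?_, ⟨c, hlarge⟩, ?_⟩
  · obtain ⟨a, rfl⟩ := hsurj c
    refine irrefl_of ltφ a ((hφdef a a).2 ((f.map_formula φfml _).1 ?_))
    have hvec : f ∘ ![a, a] = ![f a, f a] := funext (Fin.forall_fin_two.2 ⟨rfl, rfl⟩)
    rw [Sum.comp_elim, hvec]
    exact hlarge a
  · intro kψ ψfml vψ ltψ hψdef hψ hconn b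
    let ρ := withParameters ψfml vψ ⊔ (Term.var 0).equal (Term.var 1)
    have hρ : DefinesUnconnected κ ltφ ρ := by
      refine ⟨ltψ, hψ, fun x y => ?_, fun χ => hconn _ (definableRel_realize χ)⟩
      simp [ρ, realize_withParameters, con_self_eq, hψdef]
    simpa [ρ, realize_withParameters, hf] using hbound ρ hρ b

/-- Corollary 3.2: if `κ` is regular, `|M|, |L| ≤ κ`, and `<_φ` is a definable linear
ordering of `M` without greatest element (defined by the formula `φfml` with parameters
`vφ`), then `M` has a proper elementary extension `N` such that (1) `M` is not
`<_φ`-cofinal in `N`, and (2) `M` is `<_ψ`-cofinal in `N` for every definable linear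
ordering `<_ψ` of `M` of cofinality `κ` that is not definably connected to `<_φ`. -/
theorem exists_elementary_extension {L : FirstOrder.Language.{u, u}} {M : Type u}
    [Nonempty M] [L.Structure M] (κ : Cardinal.{u}) (hκ : κ.IsRegular)
    (hM : Cardinal.mk M ≤ κ) (hL : L.card ≤ κ)
    (kφ : ℕ) (φfml : L.Formula (Fin kφ ⊕ Fin 2)) (vφ : Fin kφ → M)
    (ltφ : M → M → Prop)
    (hφdef : ∀ a b : M, ltφ a b ↔ φfml.Realize (Sum.elim vφ ![a, b]))
    (hφlin : IsStrictTotalOrder M ltφ)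
    (hφnomax : ∀ a : M, ∃ b : M, ltφ a b) :
    ∃ (N : Type u) (_ : L.Structure N) (f : M ↪ₑ[L] N),
      ¬ Function.Surjective (f : M → N) ∧
      -- (1) M is not <_φ-cofinal in N:
      (∃ b : N, ∀ a : M, φfml.Realize (Sum.elim (fun i => f (vφ i)) ![f a, b])) ∧
      -- (2) M is <_ψ-cofinal in N, for every definable linear ordering <_ψ of M of
      -- cofinality κ that is not definably connected to <_φ:
      (∀ (kψ : ℕ) (ψfml : L.Formula (Fin kψ ⊕ Fin 2)) (vψ : Fin kψ → M)
        (ltψ : M → M → Prop),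
        (∀ a b : M, ltψ a b ↔ ψfml.Realize (Sum.elim vψ ![a, b])) →
        IsStrictTotalOrder M ltψ →
        cofRel ltψ = κ →
        (∀ G : M → M → Prop, DefinableRel L M G → ¬ IsConnectionRel ltφ ltψ G) →
        ∀ b : N, ∃ a : M,
          ψfml.Realize (Sum.elim (fun i => f (vψ i)) ![b, f a]) ∨ b = f a) := by
  have := isDirected_of_forall_exists hφnomax
  obtain ⟨N, _, f, hproper, hlarge, hcofinal⟩ :=
    exists_elementary_extension_general κ hκ.aleph0_le hM hL kφ φfml vφ ltφ hφdef
  exact ⟨N, _, f, hproper, hlarge, fun kψ ψfml vψ ltψ hψdef _ hcof =>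
    hcofinal kψ ψfml vψ ltψ hψdef (hcof ▸ isCardinalDirected_cofRel)⟩
end
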